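/- (Cramér's theorem) If X and Y are independent real-valued random variables and X + Y has a normal distribution, then X and Y each have a normal (possibly degenerate) distribution. -/

import Mathlib

open MeasureTheory ProbabilityTheory Filter

/-- A nowhere vanishing entire function normalized by `f 0 = 1` has an entire logarithm
vanishing at the origin. -/
theorem Complex.exists_differentiable_exp_eq {f : ℂ → ℂ} (hf : Differentiable ℂ f)
    (hf_ne : ∀ z, f z ≠ 0) (hf_zero : f 0 = 1) :
    ∃ g : ℂ → ℂ, Differentiable ℂ g ∧ g 0 = 0 ∧ ∀ z, f z = Complex.exp (g z) := by
  have hderiv : Differentiable ℂ (deriv f) :=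
    hf.contDiff.differentiable_deriv_two
  obtain ⟨g, hg_zero, hg⟩ :=
    (Differentiable.isExactOn_univ (hderiv.div hf hf_ne)).with_val_at 0 0
  have hg' (z : ℂ) : HasDerivAt g (deriv f z / f z) z := hg z (Set.mem_univ z)
  refine ⟨g, fun z ↦ (hg' z).differentiableAt, hg_zero, fun z ↦ ?_⟩
  have hquot (w : ℂ) : HasDerivAt (fun w ↦ f w * Complex.exp (-g w)) 0 w := by
    convert! (hf w).hasDerivAt.mul (hg' w).neg.cexp using 1
    field_simp [hf_ne w]
    simp
  have hconst := is_const_of_deriv_eq_zero (fun w ↦ (hquot w).differentiableAt)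
    (fun w ↦ (hquot w).deriv) z 0
  simp only [hg_zero, hf_zero, neg_zero, Complex.exp_zero, mul_one, Complex.exp_neg] at hconst
  field_simp at hconst
  exact hconst

/-- An entire function whose real part grows at most quadratically is a polynomial of degree
at most two. -/
theorem Complex.eq_quadratic_of_re_le {g : ℂ → ℂ} (hg : Differentiable ℂ g)
    (hg_zero : g 0 = 0) {A B : ℝ} (hA : 0 ≤ A) (hB : 0 ≤ B)
    (hre : ∀ z, (g z).re ≤ A * ‖z‖ + B * ‖z‖ ^ 2) :
    ∃ a b : ℂ, ∀ z, g z = a * z + b * z ^ 2 := by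
  have hbound {r : ℝ} (hr : 0 < r) (z : ℂ) (hz : z ∈ Metric.sphere (0 : ℂ) r) :
      ‖g z‖ ≤ 2 * (A * (2 * r) + B * (2 * r) ^ 2 + 1) := by
    have hzr : ‖z‖ = r := by simpa using hz
    have h := Complex.borelCaratheodory_zero (f := g) (z := z) (R := 2 * r)
      (M := A * (2 * r) + B * (2 * r) ^ 2 + 1) (by positivity) hg.differentiableOn
      (fun w hw ↦ ?_) (by positivity) (by simp [hzr, hr]) hg_zero
    · rw [hzr] at h
      convert! h using 1
      field_simp
      ring
    · have hw : ‖w‖ ≤ 2 * r := by simpa using (Metric.mem_ball.1 hw).le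
      refine (hre w).trans ?_
      have : A * ‖w‖ + B * ‖w‖ ^ 2 ≤ A * (2 * r) + B * (2 * r) ^ 2 := by gcongr
      linarith
  have hvanish {n : ℕ} (hn : 3 ≤ n) : iteratedDeriv n g 0 = 0 := by
    obtain ⟨k, rfl⟩ := Nat.exists_eq_add_of_le hn
    set C : ℝ := (3 + k).factorial * (2 * (2 * A + 4 * B + 1)) with hC
    have hCauchy : ∀ᶠ r : ℝ in atTop, ‖iteratedDeriv (3 + k) g 0‖ ≤ C / r := by
      filter_upwards [eventually_ge_atTop 1] with r hr
      have hr0 : 0 < r := by linarith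
      refine (Complex.norm_iteratedDeriv_le_of_forall_mem_sphere_norm_le (3 + k) hr0
        hg.diffContOnCl (hbound hr0)).trans ?_
      have hpow : 2 * (A * (2 * r) + B * (2 * r) ^ 2 + 1) * r
          ≤ 2 * (2 * A + 4 * B + 1) * r ^ (3 + k) :=
        calc 2 * (A * (2 * r) + B * (2 * r) ^ 2 + 1) * r
            ≤ 2 * (2 * A + 4 * B + 1) * r ^ 3 := by
              have h2 : r ≤ r ^ 2 := by nlinarith
              have h3 : r ^ 2 ≤ r ^ 3 := by nlinarith
              nlinarith [mul_le_mul_of_nonneg_left h3 hA]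
          _ ≤ 2 * (2 * A + 4 * B + 1) * r ^ (3 + k) := by
              gcongr
      rw [div_le_div_iff₀ (by positivity) hr0, hC]
      calc _ = (3 + k).factorial * (2 * (A * (2 * r) + B * (2 * r) ^ 2 + 1) * r) := by ring
        _ ≤ (3 + k).factorial * (2 * (2 * A + 4 * B + 1) * r ^ (3 + k)) := by gcongr
        _ = _ := by ring
    have hlim : Tendsto (fun r : ℝ ↦ C / r) atTop (nhds 0) :=
      tendsto_const_nhds.div_atTop tendsto_id
    exact norm_le_zero_iff.1 (ge_of_tendsto hlim hCauchy)
  refine ⟨iteratedDeriv 1 g 0, iteratedDeriv 2 g 0 / 2, fun z ↦ ?_⟩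
  rw [← Complex.taylorSeries_eq_of_entire' (c := 0) (z := z) hg,
    tsum_eq_sum (s := Finset.range 3)]
  · simp only [Finset.sum_range_succ, Finset.sum_range_zero, iteratedDeriv_zero, hg_zero, sub_zero,
      Nat.factorial]
    push_cast
    ring
  · intro n hn
    rw [hvanish (by simpa using hn)]
    simp

namespace ProbabilityTheory

variable {Ω : Type*} [MeasurableSpace Ω] {μ : Measure Ω} {X Y : Ω → ℝ}

theorem IndepFun.complexMGF_add (h : IndepFun X Y μ) (hX : AEMeasurable X μ)
    (hY : AEMeasurable Y μ) (z : ℂ) :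
    complexMGF (X + Y) μ z = complexMGF X μ z * complexMGF Y μ z := by
  have hφ : Measurable fun x : ℝ ↦ Complex.exp (z * x) := by fun_prop
  simp only [complexMGF, Pi.add_apply, Complex.ofReal_add, mul_add, Complex.exp_add]
  exact (h.comp hφ hφ).integral_fun_mul_eq_mul_integral
    (hφ.comp_aemeasurable hX).aestronglyMeasurable (hφ.comp_aemeasurable hY).aestronglyMeasurable

/-- The Jensen lower bound on the moment generating function. -/
theorem exp_mul_integral_le_mgf [IsProbabilityMeasure μ] {t : ℝ} (hX : Integrable X μ)
    (hexp : Integrable (fun ω ↦ Real.exp (t * X ω)) μ) :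
    Real.exp (t * μ[X]) ≤ mgf X μ t := by
  have h := convexOn_exp.map_integral_le Real.continuous_exp.continuousOn isClosed_univ
    (Eventually.of_forall fun ω ↦ Set.mem_univ (t * X ω)) (hX.const_mul t) hexp
  simpa [mgf, integral_const_mul] using h

/-- A random variable whose complex moment generating function is the exponential of a quadratic
polynomial is Gaussian. -/
theorem map_eq_gaussianReal_of_complexMGF_eq_exp [IsProbabilityMeasure μ]
    (hX : integrableExpSet X μ = Set.univ) {a b : ℂ}
    (h : ∀ z, complexMGF X μ z = Complex.exp (a * z + b * z ^ 2)) :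
    μ.map X = gaussianReal μ[X] (variance X μ).toNNReal := by
  have hint (z : ℂ) : z.re ∈ interior (integrableExpSet X μ) := by simp [hX]
  have hXm : AEMeasurable X μ := aemeasurable_of_mem_interior_integrableExpSet (hint 0)
  have hexp (z : ℂ) : HasDerivAt (complexMGF X μ)
      ((a + 2 * b * z) * Complex.exp (a * z + b * z ^ 2)) z := by
    rw [funext h]
    convert! (((hasDerivAt_id z).const_mul a).add
      ((hasDerivAt_pow 2 z).const_mul b)).cexp using 1
    simp
    ring
  have hfirst (z : ℂ) : μ[fun ω ↦ (X ω : ℂ) * Complex.exp (z * X ω)]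
      = (a + 2 * b * z) * Complex.exp (a * z + b * z ^ 2) :=
    (hasDerivAt_complexMGF (hint z)).unique (hexp z)
  have hsecond : μ[fun ω ↦ (X ω : ℂ) ^ 2 * Complex.exp (0 * X ω)] = a ^ 2 + 2 * b := by
    have h1 := hasDerivAt_integral_pow_mul_exp (hint 0) 1
    simp only [pow_one, hfirst] at h1
    have hlin : HasDerivAt (fun z : ℂ ↦ a + 2 * b * z) (2 * b) 0 := by
      simpa using ((hasDerivAt_id (0 : ℂ)).const_mul (2 * b)).const_add a
    have h2 := hlin.mul (hexp 0)
    rw [funext h] at h2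
    have := h1.unique h2
    simp at this ⊢
    rw [this]
    ring
  have ha : a = (μ[X] : ℝ) := by
    have := hfirst 0
    simp only [zero_mul, Complex.exp_zero, mul_one, mul_zero, add_zero, ne_eq, OfNat.ofNat_ne_zero,
      not_false_eq_true, zero_pow] at this
    rw [← this, integral_complex_ofReal]
  have hb : b = (variance X μ : ℝ) / 2 := by
    have hL : MemLp X 2 μ := by
      simpa using memLp_of_mem_interior_integrableExpSet (hint 0) 2
    rw [variance_eq_sub hL]
    have : (∫ ω, (X ω : ℂ) ^ 2 ∂μ) = ((∫ ω, (X ω) ^ 2 ∂μ : ℝ) : ℂ) := by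
      rw [← integral_complex_ofReal]
      simp
    simp only [zero_mul, Complex.exp_zero, mul_one, this] at hsecond
    simp only [Pi.pow_apply, Complex.ofReal_sub, Complex.ofReal_pow, hsecond, ← ha]
    ring
  rw [← Measure.map_id (μ := gaussianReal _ _)]
  refine Measure.ext_of_complexMGF_eq hXm aemeasurable_id (funext fun z ↦ ?_)
  rw [h, complexMGF_id_gaussianReal, Real.coe_toNNReal _ (variance_nonneg X μ), ha, hb]
  congr 1
  ring

theorem integrableExpSet_eq_univ_of_mgf_ne_zero (h : ∀ t, mgf X μ t ≠ 0) :
    integrableExpSet X μ = Set.univ :=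
  Set.eq_univ_of_forall fun t ↦ by
    by_contra ht
    exact h t (mgf_undef ht)

/-- An independent summand of a Gaussian random variable is Gaussian. -/
theorem IndepFun.exists_map_eq_gaussianReal_of_add [IsProbabilityMeasure μ]
    (hindep : IndepFun X Y μ) (hX : AEMeasurable X μ) (hY : AEMeasurable Y μ)
    {m : ℝ} {v : NNReal} (hsum : μ.map (X + Y) = gaussianReal m v) :
    ∃ (m : ℝ) (v : NNReal), μ.map X = gaussianReal m v := by
  have hmgf (t : ℝ) : mgf X μ t * mgf Y μ t = Real.exp (m * t + v * t ^ 2 / 2) := by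
    rw [← hindep.mgf_add' hX.aestronglyMeasurable hY.aestronglyMeasurable,
      mgf_gaussianReal hsum]
  have hne (t : ℝ) : mgf X μ t * mgf Y μ t ≠ 0 := by
    rw [hmgf]
    exact Real.exp_ne_zero _
  have hXexp := integrableExpSet_eq_univ_of_mgf_ne_zero fun t ↦ left_ne_zero_of_mul (hne t)
  have hYexp := integrableExpSet_eq_univ_of_mgf_ne_zero fun t ↦ right_ne_zero_of_mul (hne t)
  have hYint : Integrable Y μ :=
    integrable_of_mem_interior_integrableExpSet (by simp [hYexp])
  have hYexp' (t : ℝ) : Integrable (fun ω ↦ Real.exp (t * Y ω)) μ :=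
    Set.eq_univ_iff_forall.1 hYexp t
  have hdiff : Differentiable ℂ (complexMGF X μ) := fun z ↦
    (hasDerivAt_complexMGF (by simp [hXexp])).differentiableAt
  have hcne (z : ℂ) : complexMGF X μ z ≠ 0 := by
    refine left_ne_zero_of_mul (b := complexMGF Y μ z) ?_
    rw [← hindep.complexMGF_add hX hY, complexMGF_gaussianReal hsum]
    exact Complex.exp_ne_zero _
  obtain ⟨g, hg, hg_zero, hfg⟩ :=
    Complex.exists_differentiable_exp_eq hdiff hcne (by simp [complexMGF])
  have hmgf_le (t : ℝ) : mgf X μ t ≤ Real.exp ((m - μ[Y]) * t + v * t ^ 2 / 2) := by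
    have h : mgf X μ t * Real.exp (t * μ[Y]) ≤ Real.exp (m * t + v * t ^ 2 / 2) := by
      rw [← hmgf]
      exact mul_le_mul_of_nonneg_left (exp_mul_integral_le_mgf hYint (hYexp' t)) mgf_nonneg
    rw [← le_div_iff₀ (Real.exp_pos _), ← Real.exp_sub] at h
    convert! h using 2
    ring
  obtain ⟨a, b, hab⟩ := Complex.eq_quadratic_of_re_le hg hg_zero (abs_nonneg (m - μ[Y]))
    (B := v / 2) (by positivity) fun z ↦ by
    have h : Real.exp (g z).re ≤ Real.exp ((m - μ[Y]) * z.re + v * z.re ^ 2 / 2) := by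
      rw [← Complex.norm_exp, ← hfg]
      exact norm_complexMGF_le_mgf.trans (hmgf_le _)
    refine (Real.exp_le_exp.1 h).trans ?_
    have h1 : (m - μ[Y]) * z.re ≤ |m - μ[Y]| * ‖z‖ :=
      (le_abs_self _).trans (by rw [abs_mul]; gcongr; exact Complex.abs_re_le_norm z)
    have h2 : z.re ^ 2 ≤ ‖z‖ ^ 2 := by
      rw [← sq_abs]
      gcongr
      exact Complex.abs_re_le_norm z
    have h3 : (v : ℝ) / 2 * z.re ^ 2 ≤ v / 2 * ‖z‖ ^ 2 := by gcongr
    linarith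
  exact ⟨_, _, map_eq_gaussianReal_of_complexMGF_eq_exp hXexp fun z ↦ by rw [hfg, hab]⟩

end ProbabilityTheory

theorem cramer_decomposition {Ω : Type*} [MeasurableSpace Ω] (μ : Measure Ω)
    [IsProbabilityMeasure μ] (X Y : Ω → ℝ) (hX : Measurable X) (hY : Measurable Y)
    (hindep : IndepFun X Y μ)
    (hsum : ∃ (m : ℝ) (v : NNReal), μ.map (X + Y) = gaussianReal m v) :
    (∃ (m : ℝ) (v : NNReal), μ.map X = gaussianReal m v) ∧
      (∃ (m : ℝ) (v : NNReal), μ.map Y = gaussianReal m v) := by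
  obtain ⟨m, v, h⟩ := hsum
  exact ⟨hindep.exists_map_eq_gaussianReal_of_add hX.aemeasurable hY.aemeasurable h,
    hindep.symm.exists_map_eq_gaussianReal_of_add hY.aemeasurable hX.aemeasurable
      (by rwa [add_comm])⟩
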